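/- arXiv:1407.4897 — 5 statements merged into one kernel-verified Lean document; each statement's English description precedes it below -/
import Mathlib

section
/- Let k ≥ 2 and m ≥ 1 be fixed integers. For x > 3 set w := log log log x, W := ∏_{p ≤ w, p prime} p, and B := (φ(W)/W)·log x. Suppose that for each admissible k-tuple (h_1,…,h_k) and (for all sufficiently large x) each residue class b mod W such that b + h_i is coprime to W for all i = 1,…,k, one can find nonnegative weight functions ν = ν_x : ℕ → [0,∞) and constants α > 0 and β_1,…,β_k ≥ 0 (independent of x) such that, as x → ∞: ∑_{x ≤ n ≤ 2x, n ≡ b (mod W)} ν(n) ≤ (α + o(1)) B^{−k} x/W; for each i = 1,…,k, ∑_{x ≤ n ≤ 2x, n ≡ b (mod W)} ν(n) θ(n+h_i) ≥ (β_i − o(1)) B^{1−k} x/φ(W); and β_1 + … + β_k > m·α. Then DHL[k,m+1] holds. -/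
open Filter

/-- A `k`-tuple of increasing integers is admissible if for every prime `p`
its entries do not occupy all residue classes modulo `p`. -/
def Admissible {k : ℕ} (h : Fin k → ℤ) : Prop :=
  StrictMono h ∧ ∀ p : ℕ, p.Prime → ∃ a : ZMod p, ∀ i, (h i : ZMod p) ≠ a

/-- `DHL[k,j]`: for every admissible `k`-tuple `(h₁,…,h_k)` there are infinitely many
`n` for which at least `j` of `n + h₁, …, n + h_k` are prime. -/
def DHL (k j : ℕ) : Prop :=
  ∀ h : Fin k → ℤ, Admissible h →
    ∀ N : ℤ, ∃ n : ℤ, N < n ∧ j ≤ {i : Fin k | Prime (n + h i)}.ncard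

/-- `θ(n) = log n` if `n` is prime and `0` otherwise. -/
noncomputable def primeLog (z : ℤ) : ℝ :=
  letI := Classical.propDecidable (Prime z)
  if Prime z then Real.log (z : ℝ) else 0

/-- `W = W(x) = ∏_{p ≤ w} p` with `w = log log log x`. -/
noncomputable def Wof (x : ℕ) : ℕ :=
  ∏ p ∈ Finset.filter Nat.Prime
      (Finset.Iic ⌊Real.log (Real.log (Real.log (x : ℝ)))⌋₊), p

/-- `B = B(x) = (φ(W)/W) log x`. -/
noncomputable def Bof (x : ℕ) : ℝ :=
  ((Nat.totient (Wof x) : ℝ) / (Wof x : ℝ)) * Real.log (x : ℝ)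

theorem exists_b {k : ℕ} (h : Fin k → ℤ) (hh : Admissible h) (x : ℕ) :
    ∃ b : ℕ, ∀ i : Fin k, Int.gcd ((b : ℤ) + h i) (Wof x) = 1 := by
  have h1 : ∀ p : ℕ, ∃ r : ℕ, p.Prime → ∀ i, ¬ ((p : ℤ) ∣ (r : ℤ) + h i) := by
    intro p
    by_cases hp : p.Prime
    · obtain ⟨a, ha⟩ := hh.2 p hp
      haveI : NeZero p := ⟨hp.ne_zero⟩
      refine ⟨(-a).val, fun _ i hd => ha i ?_⟩
      have := (ZMod.intCast_zmod_eq_zero_iff_dvd _ p).2 hd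
      push_cast at this
      rw [ZMod.natCast_zmod_val] at this
      linear_combination this
    · exact ⟨0, fun h => absurd h hp⟩
  choose r hr using h1
  set t := Finset.filter Nat.Prime
      (Finset.Iic ⌊Real.log (Real.log (Real.log (x : ℝ)))⌋₊) with ht
  have htp : ∀ p ∈ t, p.Prime := fun p hp => (Finset.mem_filter.1 hp).2
  obtain ⟨b, hb⟩ := Nat.chineseRemainderOfFinset r (fun p => p) t
    (fun p hp => (htp p hp).ne_zero)
    (fun p hp q hq hpq => (Nat.coprime_primes (htp p hp) (htp q hq)).2 hpq)
  refine ⟨b, fun i => ?_⟩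
  rw [Int.gcd_def, Int.natAbs_natCast]
  unfold Wof
  rw [← ht]
  change Nat.Coprime _ _
  refine Nat.Coprime.prod_right fun p hp => ?_
  rw [Nat.coprime_comm, (htp p hp).coprime_iff_not_dvd]
  intro hd
  refine hr p (htp p hp) i ?_
  have h2 : (p : ℤ) ∣ (b : ℤ) + h i := Int.natCast_dvd.2 hd
  have h3 : (p : ℤ) ∣ (r p : ℤ) - b := (Nat.modEq_iff_dvd).1 (hb p hp)
  have := dvd_add h2 h3
  have e : (b : ℤ) + h i + ((r p : ℤ) - b) = (r p : ℤ) + h i := by ring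
  rwa [e] at this

theorem Wof_pos (x : ℕ) : 0 < Wof x :=
  Finset.prod_pos fun _ hp => (Finset.mem_filter.1 hp).2.pos

theorem theta_sum_le {k m : ℕ} (h : Fin k → ℤ) (n : ℤ) (L : ℝ) (hL : 0 ≤ L)
    (hle : ∀ i, Real.log ((n + h i : ℤ) : ℝ) ≤ L)
    (hc : {i : Fin k | Prime (n + h i)}.ncard ≤ m) :
    ∑ i, primeLog (n + h i) ≤ m * L := by
  classical
  have h1 : ∑ i, primeLog (n + h i) ≤ ∑ i, if Prime (n + h i) then L else 0 := by
    refine Finset.sum_le_sum fun i _ => ?_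
    unfold primeLog
    by_cases hp : Prime (n + h i)
    · simp only [hp, if_true]; exact hle i
    · simp only [hp, if_false]; exact le_rfl
  refine h1.trans ?_
  rw [← Finset.sum_filter, Finset.sum_const, nsmul_eq_mul]
  refine mul_le_mul_of_nonneg_right ?_ hL
  have : {i : Fin k | Prime (n + h i)} =
      ((Finset.univ.filter fun i => Prime (n + h i) : Finset (Fin k)) : Set (Fin k)) := by
    ext; simp
  rw [this, Set.ncard_coe_finset] at hc
  exact_mod_cast hc

/-- **Polymath8b, Lemma 3.4 (criterion for DHL)**: let `k ≥ 2` and `m ≥ 1` be fixed.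
Suppose that for each admissible `k`-tuple `(h₁,…,h_k)` and each residue class
`b (W)` (a function of `x`, as `W = W(x)`) with `b + hᵢ` coprime to `W` for all `i`,
one can find nonnegative weights `ν = ν_x : ℕ → ℝ⁺` and fixed `α > 0`,
`β₁, …, β_k ≥ 0` such that, as `x → ∞`:
`∑_{x ≤ n ≤ 2x, n ≡ b (W)} ν(n) ≤ (α + o(1)) B^{-k} x/W`,
`∑_{x ≤ n ≤ 2x, n ≡ b (W)} ν(n) θ(n+hᵢ) ≥ (βᵢ − o(1)) B^{1-k} x/φ(W)` for each `i`, and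
`β₁ + ⋯ + β_k > m α`.  Then `DHL[k,m+1]` holds. -/
theorem dhl_criterion (k m : ℕ) (hk : 2 ≤ k) (hm : 1 ≤ m)
    (H : ∀ h : Fin k → ℤ, Admissible h →
      ∀ b : ℕ → ℕ,
        (∀ x : ℕ, ∀ i : Fin k, Int.gcd ((b x : ℤ) + h i) (Wof x) = 1) →
        ∃ (ν : ℕ → ℕ → ℝ) (α : ℝ) (β : Fin k → ℝ),
          0 < α ∧ (∀ i, 0 ≤ β i) ∧ (∀ x n, 0 ≤ ν x n) ∧
          (∃ err : ℕ → ℝ, Tendsto err atTop (nhds 0) ∧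
            ∀ᶠ x : ℕ in atTop,
              (∑ n ∈ (Finset.Icc x (2 * x)).filter (fun n => n % Wof x = b x % Wof x),
                  ν x n)
                ≤ (α + err x) * Bof x ^ (-(k : ℝ)) * x / Wof x) ∧
          (∀ i : Fin k, ∃ err : ℕ → ℝ, Tendsto err atTop (nhds 0) ∧
            ∀ᶠ x : ℕ in atTop,
              (β i - err x) * Bof x ^ (1 - (k : ℝ)) * x / Nat.totient (Wof x)
                ≤ ∑ n ∈ (Finset.Icc x (2 * x)).filter
                      (fun n => n % Wof x = b x % Wof x),
                    ν x n * primeLog ((n : ℤ) + h i)) ∧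
          (m : ℝ) * α < ∑ i, β i) :
    DHL k (m + 1) := by
  intro h hh N
  by_contra hcon
  push Not at hcon
  choose b hb using exists_b h hh
  obtain ⟨ν, α, β, hα, hβ, hν, ⟨err, herr, hup⟩, hlow, hsum⟩ := H h hh b hb
  choose e he hlo using hlow
  -- a uniform bound for the shifts
  obtain ⟨C, hC⟩ : ∃ C : ℕ, ∀ i, |h i| ≤ C := by
    refine ⟨∑ i, (h i).natAbs, fun i => ?_⟩
    rw [Int.abs_eq_natAbs]
    exact_mod_cast Finset.single_le_sum (f := fun i => (h i).natAbs)
      (fun _ _ => Nat.zero_le _) (Finset.mem_univ i)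
  have hlogtop : Tendsto (fun x : ℕ => Real.log (x : ℝ)) atTop atTop :=
    Real.tendsto_log_atTop.comp tendsto_natCast_atTop_atTop
  have key : ∀ᶠ x : ℕ in atTop,
      ∑ i, (β i - e i x) ≤ m * (1 + Real.log 3 / Real.log x) * (α + err x) := by
    filter_upwards [hup, eventually_all.2 hlo, eventually_gt_atTop N.toNat,
      eventually_gt_atTop C, eventually_gt_atTop 3] with x hx1 hx2 hxN hxC hx3
    have hxpos : (0 : ℝ) < x := by positivity
    have hlogx : 0 < Real.log (x : ℝ) := Real.log_pos (by exact_mod_cast (by omega : 1 < x))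
    have hW : (0 : ℝ) < Wof x := by exact_mod_cast Wof_pos x
    have hφ : (0 : ℝ) < Nat.totient (Wof x) := by
      exact_mod_cast Nat.totient_pos.2 (Wof_pos x)
    have hB : 0 < Bof x := by unfold Bof; positivity
    set S := (Finset.Icc x (2 * x)).filter (fun n => n % Wof x = b x % Wof x) with hS
    have hlog3 : Real.log (3 * x : ℝ) = Real.log 3 + Real.log x :=
      Real.log_mul (by norm_num) hxpos.ne'
    have hl3 : 0 < Real.log (3 : ℝ) := Real.log_pos (by norm_num)
    have hL : 0 ≤ Real.log (3 * x : ℝ) := by rw [hlog3]; positivity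
    have hA : ∑ i, ∑ n ∈ S, ν x n * primeLog ((n : ℤ) + h i)
        ≤ m * Real.log (3 * x : ℝ) * ∑ n ∈ S, ν x n := by
      rw [Finset.sum_comm, Finset.mul_sum]
      refine Finset.sum_le_sum fun n hn => ?_
      rw [← Finset.mul_sum, mul_comm]
      refine mul_le_mul_of_nonneg_right ?_ (hν x n)
      have hn' := Finset.mem_Icc.1 (Finset.mem_filter.1 hn).1
      refine theta_sum_le h n _ hL (fun i => ?_) ?_
      · have hi := abs_le.1 (hC i)
        refine Real.log_le_log ?_ ?_
        · have : (0 : ℤ) < n + h i := by omega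
          exact_mod_cast this
        · have : (n : ℤ) + h i ≤ 3 * x := by omega
          exact_mod_cast this
      · have := hcon n (by omega)
        omega
    have h1 : ∑ i, (β i - e i x) * Bof x ^ (1 - (k : ℝ)) * x / Nat.totient (Wof x)
        ≤ m * Real.log (3 * x : ℝ) * ((α + err x) * Bof x ^ (-(k : ℝ)) * x / Wof x) :=
      (Finset.sum_le_sum fun i _ => hx2 i).trans
        (hA.trans (mul_le_mul_of_nonneg_left hx1 (by positivity)))
    have hBk : Bof x ^ (1 - (k : ℝ)) = Bof x * Bof x ^ (-(k : ℝ)) := by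
      rw [sub_eq_add_neg, Real.rpow_add hB, Real.rpow_one]
    have hP : 0 < Bof x ^ (-(k : ℝ)) := Real.rpow_pos_of_pos hB _
    rw [← Finset.sum_div, ← Finset.sum_mul, ← Finset.sum_mul, hBk] at h1
    set P := Bof x ^ (-(k : ℝ)) with hPdef
    have hK : 0 < P * x * Real.log x / Wof x := by positivity
    refine le_of_mul_le_mul_right ?_ hK
    have e1 : (∑ i, (β i - e i x)) * (P * x * Real.log x / Wof x)
        = (∑ i, (β i - e i x)) * (Bof x * P) * x / Nat.totient (Wof x) := by
      unfold Bof; field_simp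
    have e2 : m * (1 + Real.log 3 / Real.log x) * (α + err x) * (P * x * Real.log x / Wof x)
        = m * Real.log (3 * x : ℝ) * ((α + err x) * P * x / Wof x) := by
      rw [hlog3]; field_simp; ring
    rw [e1, e2]
    exact h1
  have hl : Tendsto (fun x : ℕ => ∑ i, (β i - e i x)) atTop (nhds (∑ i, (β i - 0))) :=
    tendsto_finsetSum _ fun i _ => tendsto_const_nhds.sub (he i)
  have hr : Tendsto (fun x : ℕ => m * (1 + Real.log 3 / Real.log x) * (α + err x)) atTop
      (nhds (m * (1 + 0) * (α + 0))) :=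
    (tendsto_const_nhds.mul (tendsto_const_nhds.add (hlogtop.const_div_atTop _))).mul
      (tendsto_const_nhds.add herr)
  have := le_of_tendsto_of_tendsto hl hr key
  simp only [sub_zero, add_zero, mul_one] at this
  linarith
end

section
/- Let k ≥ 2, and suppose there exists a positive square-integrable function F : R_k → (0,∞) (extended by zero to [0,∞)^k) and λ > 0 satisfying the eigenfunction equation λ·F(t_1,…,t_k) = ∑_{i=1}^k ∫_0^∞ F(t_1,…,t_{i−1},t_i',t_{i+1},…,t_k) dt_i' for all (t_1,…,t_k) ∈ R_k. Then λ = M_k. -/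
open MeasureTheory

/-- The scaled simplex `c · R_k = {t ∈ [0,∞)^k : t₁ + ⋯ + t_k ≤ c}`. -/
def simplex (k : ℕ) (c : ℝ) : Set (Fin k → ℝ) :=
  {t | (∀ i, 0 ≤ t i) ∧ ∑ i, t i ≤ c}

/-- `I(F) = ∫_{[0,∞)^k} F(t)² dt`. -/
noncomputable def sieveI {k : ℕ} (F : (Fin k → ℝ) → ℝ) : ℝ :=
  ∫ t in {t : Fin k → ℝ | ∀ i, 0 ≤ t i}, (F t) ^ 2

/-- `J_i(F) = ∫_{[0,∞)^{k-1}} (∫_0^∞ F(t) dt_i)² dt_1 ⋯ dt_{i-1} dt_{i+1} ⋯ dt_k`. -/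
noncomputable def sieveJ {k : ℕ} (i : Fin k) (F : (Fin k → ℝ) → ℝ) : ℝ :=
  ∫ y in {y : {j : Fin k // j ≠ i} → ℝ | ∀ j, 0 ≤ y j},
    (∫ s in Set.Ioi (0 : ℝ), F (fun j => if h : j = i then s else y ⟨j, h⟩)) ^ 2

/-- `M_k`, the supremum of `(∑ᵢ J_i(F))/I(F)` over square-integrable `F` supported
on the simplex `R_k` that are not almost everywhere zero. -/
noncomputable def Mquant (k : ℕ) : ℝ :=
  sSup {r : ℝ | ∃ F : (Fin k → ℝ) → ℝ, MemLp F 2 volume ∧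
    (∀ t, t ∉ simplex k 1 → F t = 0) ∧ ¬ (F =ᵐ[volume] 0) ∧
    r = (∑ i, sieveJ i F) / sieveI F}


namespace EigMk

variable {k : ℕ}

/-- Insert the coordinate `s` at position `i`. -/
def ins (i : Fin k) (p : ({j : Fin k // j ≠ i} → ℝ) × ℝ) : Fin k → ℝ :=
  fun j => if h : j = i then p.2 else p.1 ⟨j, h⟩

/-- Forget the coordinate `i`. -/
def pr (i : Fin k) (t : Fin k → ℝ) : {j : Fin k // j ≠ i} → ℝ := fun j => t j

lemma pr_ins (i : Fin k) (p) : pr i (ins i p) = p.1 := by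
  funext j
  simp [pr, ins, j.2]

lemma ins_pr (i : Fin k) (t : Fin k → ℝ) (s : ℝ) : ins i (pr i t, s) = Function.update t i s := by
  funext j
  by_cases h : j = i
  · subst h; simp [ins]
  · simp [ins, pr, h]

lemma exists_equiv (i : Fin k) : ∃ E : (Fin k → ℝ) ≃ᵐ ({j : Fin k // j ≠ i} → ℝ) × ℝ,
    MeasurePreserving E volume (volume.prod volume) ∧ (∀ p, E.symm p = ins i p) := by
  let _ : Unique {j : Fin k // ¬ j ≠ i} := ⟨⟨⟨i, by simp⟩⟩, fun a => Subtype.ext (by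
    have := a.2
    simpa using this)⟩
  have h1 := volume_preserving_piEquivPiSubtypeProd (fun _ : Fin k => ℝ) (fun j => j ≠ i)
  have hu : MeasurePreserving (MeasurableEquiv.funUnique {j : Fin k // ¬ j ≠ i} ℝ)
      volume volume := by
    convert volume_preserving_funUnique {j : Fin k // ¬ j ≠ i} ℝ
  have h2 := (MeasurePreserving.id (volume : Measure ({j : Fin k // j ≠ i} → ℝ))).prod hu
  refine ⟨(MeasurableEquiv.piEquivPiSubtypeProd (fun _ : Fin k => ℝ) (fun j => j ≠ i)).trans
    ((MeasurableEquiv.refl _).prodCongr (MeasurableEquiv.funUnique {j : Fin k // ¬ j ≠ i} ℝ)),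
    h2.comp h1, ?_⟩
  intro p
  rw [MeasurableEquiv.symm_apply_eq]
  apply Prod.ext
  · funext j
    change p.1 j = ins i p j
    simp [ins, j.2]
  · change p.2 = ins i p i
    simp [ins]

lemma mp_ins (i : Fin k) : MeasurePreserving (ins i) (volume.prod volume) volume := by
  obtain ⟨E, hE, h⟩ := exists_equiv i
  have : ins i = E.symm := funext fun p => (h p).symm
  rw [this]
  exact hE.symm E

lemma emb_ins (i : Fin k) : MeasurableEmbedding (ins i) := by
  obtain ⟨E, hE, h⟩ := exists_equiv i
  have : ins i = E.symm := funext fun p => (h p).symm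
  rw [this]
  exact E.symm.measurableEmbedding

lemma qmp_pr (i : Fin k) : Measure.QuasiMeasurePreserving (pr i) volume volume := by
  obtain ⟨E, hE, h⟩ := exists_equiv i
  have : pr i = Prod.fst ∘ E := by
    funext t
    have := pr_ins i (E t)
    rw [← h, E.symm_apply_apply] at this
    exact this
  rw [this]
  exact Measure.quasiMeasurePreserving_fst.comp hE.quasiMeasurePreserving

lemma key (i : Fin k) (H : (Fin k → ℝ) → ENNReal) (hH : AEMeasurable H volume)
    (A : ({j : Fin k // j ≠ i} → ℝ) → ENNReal) (hA : AEMeasurable A volume) :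
    ∫⁻ y, (∫⁻ s, H (ins i (y, s))) * A y = ∫⁻ t, H t * A (pr i t) := by
  have hH' : AEMeasurable (fun p => H (ins i p)) (volume.prod volume) :=
    hH.comp_quasiMeasurePreserving (mp_ins i).quasiMeasurePreserving
  rw [← (mp_ins i).lintegral_comp_emb (emb_ins i)]
  simp only [pr_ins]
  rw [lintegral_prod (fun p => H (ins i p) * A p.1) (hH'.mul hA.comp_fst)]
  apply lintegral_congr_ae
  filter_upwards [hH'.aestronglyMeasurable.prodMk_left] with y hy
  exact (lintegral_mul_const'' _ hy.aemeasurable).symm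

lemma simplex_meas : volume (simplex k 1) < ⊤ := by
  have : simplex k 1 ⊆ Set.Icc 0 1 := by
    rintro t ⟨h0, h1⟩
    refine ⟨h0, fun i => ?_⟩
    exact (Finset.single_le_sum (fun j _ => h0 j) (Finset.mem_univ i)).trans h1
  exact (measure_mono this).trans_lt isCompact_Icc.measure_lt_top

lemma integrable_of (G : (Fin k → ℝ) → ℝ) (h2 : MemLp G 2 volume)
    (hs : ∀ t, t ∉ simplex k 1 → G t = 0) : Integrable G volume := by
  have h : IntegrableOn G (simplex k 1) volume := by
    have : IsFiniteMeasure (volume.restrict (simplex k 1)) := ⟨by simpa using simplex_meas⟩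
    exact (h2.restrict (simplex k 1)).integrable (by norm_num)
  exact (integrableOn_iff_integrable_of_support_subset (fun t ht => by
    by_contra hc; exact ht (hs t hc))).1 h

lemma inner_full (i : Fin k) (G : (Fin k → ℝ) → ℝ)
    (hs : ∀ t, t ∉ simplex k 1 → G t = 0) (y) :
    ∫ s in Set.Ioi (0 : ℝ), G (ins i (y, s)) = ∫ s, G (ins i (y, s)) := by
  rw [← integral_Ici_eq_integral_Ioi]
  apply setIntegral_eq_integral_of_forall_compl_eq_zero
  intro s hs'
  apply hs
  intro h
  have := h.1 i
  simp [ins] at this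
  exact hs' this

lemma sieveI_eq (G : (Fin k → ℝ) → ℝ) (h2 : MemLp G 2 volume)
    (hs : ∀ t, t ∉ simplex k 1 → G t = 0) :
    sieveI G = (∫⁻ t, ENNReal.ofReal (G t ^ 2)).toReal := by
  unfold sieveI
  rw [setIntegral_eq_integral_of_forall_compl_eq_zero]
  · exact integral_eq_lintegral_of_nonneg_ae (Filter.Eventually.of_forall fun t => sq_nonneg _)
      (h2.1.pow 2)
  · intro t ht
    rw [hs t (fun h => ht h.1)]
    simp

lemma sieveJ_eq (i : Fin k) (G : (Fin k → ℝ) → ℝ) (h2 : MemLp G 2 volume)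
    (hs : ∀ t, t ∉ simplex k 1 → G t = 0) :
    sieveJ i G = (∫⁻ y, ENNReal.ofReal ((∫ s, G (ins i (y, s))) ^ 2)).toReal := by
  have h0 : sieveJ i G = ∫ y in {y : {j : Fin k // j ≠ i} → ℝ | ∀ j, 0 ≤ y j},
    (∫ s in Set.Ioi (0 : ℝ), G (ins i (y, s))) ^ 2 := rfl
  rw [h0]
  simp only [inner_full i G hs]
  rw [setIntegral_eq_integral_of_forall_compl_eq_zero]
  · apply integral_eq_lintegral_of_nonneg_ae (Filter.Eventually.of_forall fun t => sq_nonneg _)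
    have := h2.1.comp_measurePreserving (mp_ins i)
    exact (this.integral_prod_right').pow 2
  · intro y hy
    have : ∀ s, G (ins i (y, s)) = 0 := by
      intro s
      apply hs
      intro h
      apply hy
      intro j
      have := h.1 j
      simpa [ins, j.2] using this
    simp [this]

lemma finI (G : (Fin k → ℝ) → ℝ) (h2 : MemLp G 2 volume) :
    ∫⁻ t, ENNReal.ofReal (G t ^ 2) ≠ ⊤ :=
  ((hasFiniteIntegral_iff_ofReal (Filter.Eventually.of_forall fun t => sq_nonneg _)).1
    h2.integrable_sq.2).ne

/-- Slice lintegral. -/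
noncomputable def A (i : Fin k) (F : (Fin k → ℝ) → ℝ) (y : {j : Fin k // j ≠ i} → ℝ) : ENNReal :=
  ∫⁻ s, ENNReal.ofReal (F (ins i (y, s)))

lemma A_meas (i : Fin k) (F : (Fin k → ℝ) → ℝ) (h : AEStronglyMeasurable F volume) :
    AEMeasurable (A i F) volume :=
  ((h.aemeasurable.ennreal_ofReal).comp_quasiMeasurePreserving
    (mp_ins i).quasiMeasurePreserving).lintegral_prod_right'

lemma A_eq (i : Fin k) (F : (Fin k → ℝ) → ℝ) (h : Integrable F volume) (h0 : ∀ t, 0 ≤ F t) :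
    ∀ᵐ y, A i F y = ENNReal.ofReal (∫ s, F (ins i (y, s))) := by
  have h1 : Integrable (fun p => F (ins i p)) (volume.prod volume) :=
    ((mp_ins i).integrable_comp_emb (emb_ins i)).2 h
  filter_upwards [h1.prod_right_ae] with y hy
  exact (ofReal_integral_eq_lintegral_ofReal hy (Filter.Eventually.of_forall fun s => h0 _)).symm

/-- The main identity. -/
lemma main_id (F G : (Fin k → ℝ) → ℝ) (lam : ℝ) (hlam : 0 < lam)
    (hF2 : MemLp F 2 volume) (hG : AEStronglyMeasurable G volume)
    (hGs : ∀ t, t ∉ simplex k 1 → G t = 0)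
    (hFpos : ∀ t ∈ simplex k 1, 0 < F t)
    (hFsupp : ∀ t : Fin k → ℝ, t ∉ simplex k 1 → F t = 0)
    (heig : ∀ t ∈ simplex k 1,
      lam * F t = ∑ i, ∫ s in Set.Ioi (0 : ℝ), F (Function.update t i s)) :
    ∑ i, ∫⁻ y, (∫⁻ s, ENNReal.ofReal (G (ins i (y, s)) ^ 2 / F (ins i (y, s)))) * A i F y
      = ENNReal.ofReal lam * ∫⁻ t, ENNReal.ofReal (G t ^ 2) := by
  have hH : AEMeasurable (fun t => ENNReal.ofReal (G t ^ 2 / F t)) volume :=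
    ((hG.aemeasurable.pow_const 2).div hF2.1.aemeasurable).ennreal_ofReal
  have hF0 : ∀ t, 0 ≤ F t := fun t => by
    by_cases h : t ∈ simplex k 1
    · exact (hFpos t h).le
    · exact (hFsupp t h).ge
  have hFi := integrable_of F hF2 hFsupp
  have hAm := fun i => A_meas i F hF2.1
  rw [Finset.sum_congr rfl fun i _ => key i _ hH (A i F) (hAm i)]
  rw [← lintegral_finsetSum' (f := fun i t => ENNReal.ofReal (G t ^ 2 / F t) * A i F (pr i t)) _
    fun i _ =>
    hH.mul ((hAm i).comp_quasiMeasurePreserving (qmp_pr i))]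
  rw [← lintegral_const_mul'' _ (hG.aemeasurable.pow_const 2).ennreal_ofReal]
  apply lintegral_congr_ae
  have hae : ∀ᵐ t, ∀ i, A i F (pr i t) = ENNReal.ofReal (∫ s, F (ins i (pr i t, s))) :=
    ae_all_iff.2 fun i => (qmp_pr i).ae (A_eq i F hFi hF0)
  filter_upwards [hae] with t ht
  by_cases hts : t ∈ simplex k 1
  · rw [← Finset.mul_sum, Finset.sum_congr rfl fun i _ => ht i,
      ← ENNReal.ofReal_sum_of_nonneg fun i _ => integral_nonneg fun s => hF0 _]
    have he := heig t hts
    simp only [← ins_pr, inner_full _ F hFsupp] at he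
    rw [← he, ← ENNReal.ofReal_mul (div_nonneg (sq_nonneg _) (hF0 t)),
      ← ENNReal.ofReal_mul hlam.le]
    congr 1
    have := (hFpos t hts).ne'
    field_simp
  · simp [hGs t hts]

lemma upper (i : Fin k) (F G : (Fin k → ℝ) → ℝ)
    (hF2 : MemLp F 2 volume) (hG : AEStronglyMeasurable G volume)
    (hGs : ∀ t, t ∉ simplex k 1 → G t = 0)
    (hFpos : ∀ t ∈ simplex k 1, 0 < F t)
    (hFsupp : ∀ t : Fin k → ℝ, t ∉ simplex k 1 → F t = 0) :
    ∫⁻ y, ENNReal.ofReal ((∫ s, G (ins i (y, s))) ^ 2) ≤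
      ∫⁻ y, (∫⁻ s, ENNReal.ofReal (G (ins i (y, s)) ^ 2 / F (ins i (y, s)))) * A i F y := by
  have hF0 : ∀ t, 0 ≤ F t := fun t => by
    by_cases h : t ∈ simplex k 1
    · exact (hFpos t h).le
    · exact (hFsupp t h).ge
  have mF := (hF2.1.comp_measurePreserving (mp_ins i)).prodMk_left
  have mG := (hG.comp_measurePreserving (mp_ins i)).prodMk_left
  apply lintegral_mono_ae
  filter_upwards [mF, mG] with y hy hy'
  simp only [Function.comp_apply] at hy hy'
  have e1 : ENNReal.ofReal ((∫ s, G (ins i (y, s))) ^ 2) ≤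
      (∫⁻ s, ‖G (ins i (y, s))‖ₑ) ^ 2 := by
    have := enorm_integral_le_lintegral_enorm (μ := volume) (fun s => G (ins i (y, s)))
    calc _ = ‖∫ s, G (ins i (y, s))‖ₑ ^ 2 := by
          rw [← sq_abs, ENNReal.ofReal_pow (abs_nonneg _), Real.enorm_eq_ofReal_abs]
      _ ≤ _ := by gcongr
  refine e1.trans ?_
  set f : ℝ → ENNReal := fun s =>
    ENNReal.ofReal (|G (ins i (y, s))| / √(F (ins i (y, s)))) with hf
  set g : ℝ → ENNReal := fun s => ENNReal.ofReal (√(F (ins i (y, s)))) with hg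
  have mg : AEMeasurable g := hy.aemeasurable.sqrt.ennreal_ofReal
  have mf : AEMeasurable f :=
    ((continuous_abs.measurable.comp_aemeasurable hy'.aemeasurable).div
      hy.aemeasurable.sqrt).ennreal_ofReal
  have e2 : ∀ s, ‖G (ins i (y, s))‖ₑ = (f * g) s := by
    intro s
    simp only [Pi.mul_apply, hf, hg]
    rw [← ENNReal.ofReal_mul (by positivity), Real.enorm_eq_ofReal_abs]
    congr 1
    by_cases h : ins i (y, s) ∈ simplex k 1
    · have := (Real.sqrt_pos.2 (hFpos _ h)).ne'
      field_simp
    · simp [hGs _ h]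
  have e3 : ∀ s, f s ^ (2 : ℝ) = ENNReal.ofReal (G (ins i (y, s)) ^ 2 / F (ins i (y, s))) := by
    intro s
    simp only [hf]
    rw [ENNReal.rpow_two, ← ENNReal.ofReal_pow (by positivity), div_pow, sq_abs,
      Real.sq_sqrt (hF0 _)]
  have e4 : ∀ s, g s ^ (2 : ℝ) = ENNReal.ofReal (F (ins i (y, s))) := by
    intro s
    simp only [hg]
    rw [ENNReal.rpow_two, ← ENNReal.ofReal_pow (by positivity), Real.sq_sqrt (hF0 _)]
  have cs := ENNReal.lintegral_mul_le_Lp_mul_Lq volume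
    (Real.HolderConjugate.two_two) mf mg
  simp only [e3, e4, ← e2] at cs
  calc _ ≤ _ := pow_le_pow_left' cs 2
    _ = _ := by
      rw [mul_pow, ← ENNReal.rpow_two, ← ENNReal.rpow_two, ← ENNReal.rpow_mul, ← ENNReal.rpow_mul]
      norm_num [A]

lemma equality (i : Fin k) (F : (Fin k → ℝ) → ℝ)
    (hF2 : MemLp F 2 volume)
    (hFpos : ∀ t ∈ simplex k 1, 0 < F t)
    (hFsupp : ∀ t : Fin k → ℝ, t ∉ simplex k 1 → F t = 0) :
    ∫⁻ y, ENNReal.ofReal ((∫ s, F (ins i (y, s))) ^ 2) =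
      ∫⁻ y, (∫⁻ s, ENNReal.ofReal (F (ins i (y, s)) ^ 2 / F (ins i (y, s)))) * A i F y := by
  have hF0 : ∀ t, 0 ≤ F t := fun t => by
    by_cases h : t ∈ simplex k 1
    · exact (hFpos t h).le
    · exact (hFsupp t h).ge
  apply lintegral_congr_ae
  filter_upwards [A_eq i F (integrable_of F hF2 hFsupp) hF0] with y hy
  have : ∀ x : ℝ, x ^ 2 / x = x := fun x => by
    by_cases h : x = 0
    · simp [h]
    · field_simp
  simp only [this]
  change _ = A i F y * A i F y
  rw [hy, ENNReal.ofReal_pow (integral_nonneg fun s => hF0 _), sq]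

lemma not_ae_zero (F : (Fin k → ℝ) → ℝ) (hFpos : ∀ t ∈ simplex k 1, 0 < F t) (hk : 2 ≤ k) :
    ¬ (F =ᵐ[volume] 0) := by
  intro h
  have hk' : (0 : ℝ) < k := by exact_mod_cast (by omega : 0 < k)
  have hsub : Set.pi Set.univ (fun _ : Fin k => Set.Ioo (0 : ℝ) (1 / k)) ⊆
      {t | ¬ F t = (0 : (Fin k → ℝ) → ℝ) t} := by
    intro t ht
    refine (hFpos t ⟨fun i => (ht i trivial).1.le, ?_⟩).ne'
    calc ∑ i, t i ≤ ∑ _i : Fin k, (1 / k : ℝ) :=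
          Finset.sum_le_sum fun i _ => (ht i trivial).2.le
      _ = 1 := by simp; field_simp
  have h0 := measure_mono_null hsub h
  have ho : IsOpen (Set.pi Set.univ (fun _ : Fin k => Set.Ioo (0 : ℝ) (1 / k))) :=
    isOpen_set_pi Set.finite_univ fun _ _ => isOpen_Ioo
  refine (ho.measure_pos volume ⟨fun _ => 1 / k / 2, fun i _ => ⟨?_, ?_⟩⟩).ne' h0
  · positivity
  · exact half_lt_self (by positivity)

end EigMk

/-- **Polymath8b, Corollary 6.2 (eigenfunction criterion)**: if there is a positive
square-integrable `F` on `R_k` (extended by zero) and `λ > 0` satisfying the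
eigenfunction equation `λ F(t) = ∑ᵢ ∫_0^∞ F(t₁,…,tᵢ',…,t_k) dtᵢ'` on `R_k`,
then `λ = M_k`. -/
theorem eigenfunction_gives_Mk (k : ℕ) (hk : 2 ≤ k) (F : (Fin k → ℝ) → ℝ) (lam : ℝ)
    (hlam : 0 < lam)
    (hF2 : MemLp F 2 volume)
    (hFpos : ∀ t ∈ simplex k 1, 0 < F t)
    (hFsupp : ∀ t : Fin k → ℝ, t ∉ simplex k 1 → F t = 0)
    (heig : ∀ t ∈ simplex k 1,
      lam * F t = ∑ i, ∫ s in Set.Ioi (0 : ℝ), F (Function.update t i s)) :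
    lam = Mquant k := by
  have hub : ∀ G : (Fin k → ℝ) → ℝ, MemLp G 2 volume →
      (∀ t, t ∉ simplex k 1 → G t = 0) → (∑ i, sieveJ i G) ≤ lam * sieveI G := by
    intro G hG hGs
    have hle := Finset.sum_le_sum fun i (_ : i ∈ Finset.univ) =>
      EigMk.upper i F G hF2 hG.1 hGs hFpos hFsupp
    rw [EigMk.main_id F G lam hlam hF2 hG.1 hGs hFpos hFsupp heig] at hle
    have hfin : ENNReal.ofReal lam * ∫⁻ t, ENNReal.ofReal (G t ^ 2) ≠ ⊤ :=
      ENNReal.mul_ne_top ENNReal.ofReal_ne_top (EigMk.finI G hG)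
    have hsum := ne_top_of_le_ne_top hfin hle
    have h3 := ENNReal.toReal_mono hfin hle
    rw [ENNReal.toReal_sum (fun i hi => (ENNReal.sum_ne_top.1 hsum) i hi), ENNReal.toReal_mul,
      ENNReal.toReal_ofReal hlam.le] at h3
    rw [EigMk.sieveI_eq G hG hGs, Finset.sum_congr rfl fun i _ => EigMk.sieveJ_eq i G hG hGs]
    exact h3
  have heq : (∑ i, sieveJ i F) = lam * sieveI F := by
    have hle := Finset.sum_congr rfl fun i (_ : i ∈ Finset.univ) =>
      EigMk.equality i F hF2 hFpos hFsupp
    rw [EigMk.main_id F F lam hlam hF2 hF2.1 hFsupp hFpos hFsupp heig] at hle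
    have hfin : ENNReal.ofReal lam * ∫⁻ t, ENNReal.ofReal (F t ^ 2) ≠ ⊤ :=
      ENNReal.mul_ne_top ENNReal.ofReal_ne_top (EigMk.finI F hF2)
    have hsum := ne_top_of_le_ne_top hfin hle.le
    have h3 := congrArg ENNReal.toReal hle
    rw [ENNReal.toReal_sum (fun i hi => (ENNReal.sum_ne_top.1 hsum) i hi), ENNReal.toReal_mul,
      ENNReal.toReal_ofReal hlam.le] at h3
    rw [EigMk.sieveI_eq F hF2 hFsupp,
      Finset.sum_congr rfl fun i _ => EigMk.sieveJ_eq i F hF2 hFsupp]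
    exact h3
  have hne := EigMk.not_ae_zero F hFpos hk
  have hI : sieveI F ≠ 0 := by
    rw [EigMk.sieveI_eq F hF2 hFsupp]
    intro h
    rw [ENNReal.toReal_eq_zero_iff, or_iff_left (EigMk.finI F hF2),
      lintegral_eq_zero_iff' (hF2.1.aemeasurable.pow_const 2).ennreal_ofReal] at h
    apply hne
    filter_upwards [h] with t ht
    simp only [Pi.zero_apply, ENNReal.ofReal_eq_zero] at ht ⊢
    exact pow_eq_zero_iff (two_ne_zero) |>.1 (le_antisymm ht (sq_nonneg _))
  have hgr : IsGreatest {r : ℝ | ∃ F : (Fin k → ℝ) → ℝ, MemLp F 2 volume ∧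
    (∀ t, t ∉ simplex k 1 → F t = 0) ∧ ¬ (F =ᵐ[volume] 0) ∧
    r = (∑ i, sieveJ i F) / sieveI F} lam := by
    constructor
    · exact ⟨F, hF2, hFsupp, hne, by rw [heq]; field_simp⟩
    · rintro r ⟨G, hG, hGs, -, rfl⟩
      refine div_le_of_le_mul₀ ?_ hlam.le (hub G hG hGs)
      rw [EigMk.sieveI_eq G hG hGs]
      exact ENNReal.toReal_nonneg
  exact hgr.csSup_eq.symm
end

section
/- Let w be the unique positive real number satisfying w·e^w = e^{−1}. Then M_2 = 1/(1 − w) (numerically, M_2 = 1.38593…). -/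
open MeasureTheory

/-- The extremal one-variable function. -/
noncomputable def gg (L x : ℝ) : ℝ :=
  1 / (L - 1 + x) + 1 / (2 * L - 1) * (Real.log (L - x) - Real.log (L - 1 + x))

/-- The triangle in the plane. -/
def TT : Set (ℝ × ℝ) := {p | 0 ≤ p.1 ∧ 0 ≤ p.2 ∧ p.1 + p.2 ≤ 1}

/-- The extremal two-variable function. -/
noncomputable def EE (L : ℝ) (p : ℝ × ℝ) : ℝ :=
  TT.indicator (fun p => gg L p.1 + gg L p.2) p

lemma measurable_gg (L : ℝ) : Measurable (gg L) := by
  unfold gg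
  fun_prop

lemma measurableSet_TT : MeasurableSet TT := by
  unfold TT
  refine (measurableSet_le measurable_const measurable_fst).inter
    ((measurableSet_le measurable_const measurable_snd).inter
    (measurableSet_le (measurable_fst.add measurable_snd) measurable_const))

lemma gg_strict {L x y : ℝ} (hL : 1 < L) (hx : 0 ≤ x) (hxy : x < y) (hy : y ≤ 1) :
    gg L y < gg L x := by
  unfold gg
  have h1 : 1 / (L - 1 + y) < 1 / (L - 1 + x) :=
    one_div_lt_one_div_of_lt (by linarith) (by linarith)
  have h2 : Real.log (L - y) < Real.log (L - x) := Real.log_lt_log (by linarith) (by linarith)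
  have h3 : Real.log (L - 1 + x) < Real.log (L - 1 + y) :=
    Real.log_lt_log (by linarith) (by linarith)
  have h4 : 0 < 1 / (2 * L - 1) := by
    apply one_div_pos.2
    linarith
  have := mul_lt_mul_of_pos_left (sub_lt_sub h2 h3) h4
  linarith

lemma gg_anti {L x y : ℝ} (hL : 1 < L) (hx : 0 ≤ x) (hxy : x ≤ y) (hy : y ≤ 1) :
    gg L y ≤ gg L x := by
  rcases hxy.eq_or_lt with h | h
  · rw [h]
  · exact (gg_strict hL hx h hy).le

lemma gg_one {L : ℝ} (hL : 1 < L) (h : L * (Real.log L - Real.log (L - 1)) = 2 * L - 1) :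
    gg L 1 = 0 := by
  unfold gg
  have e : Real.log L - Real.log (L - 1) = (2 * L - 1) / L := by
    field_simp
    linarith
  have e2 : L - 1 + 1 = L := by ring
  have : (2 * L - 1) ≠ 0 := by
    intro h
    linarith
  have h0 : L ≠ 0 := by linarith
  have e3 : Real.log (L - 1) - Real.log L = - ((2 * L - 1) / L) := by linarith
  rw [e2, e3, one_div_mul_eq_div, neg_div, div_div, mul_comm L, ← div_div, div_self this]
  ring

lemma gg_hasDeriv {L u : ℝ} (hL : 1 < L) (hu : 0 ≤ u) (hu1 : u ≤ 1) :
    HasDerivAt (fun u => gg L (1 - u) * (L - u)) (gg L u) u := by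
  have ha : L - 1 + (1 - u) ≠ 0 := by
    have : 0 < L - 1 + (1 - u) := by linarith
    exact this.ne'
  have hb : L - (1 - u) ≠ 0 := by
    have : 0 < L - (1 - u) := by linarith
    exact this.ne'
  have hL2 : 2 * L - 1 ≠ 0 := by
    have : 0 < 2 * L - 1 := by linarith
    exact this.ne'
  have d1 : HasDerivAt (fun u : ℝ => L - 1 + (1 - u)) (-1) u := by
    simpa using ((hasDerivAt_id u).const_sub 1).const_add (L - 1)
  have d2 : HasDerivAt (fun u : ℝ => L - (1 - u)) 1 u := by
    simpa using ((hasDerivAt_id u).const_sub 1).const_sub L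
  have d3 : HasDerivAt (fun u : ℝ => L - u) (-1) u := by
    simpa using (hasDerivAt_id u).const_sub L
  have d := (((d1.inv ha).add (((d2.log hb).sub (d1.log ha)).const_mul (1 / (2 * L - 1)))).mul d3)
  have e : (fun u => gg L (1 - u) * (L - u)) = (((fun u : ℝ => L - 1 + (1 - u))⁻¹ +
    fun u : ℝ => 1 / (2 * L - 1) * ((fun u => Real.log (L - (1 - u))) -
      (fun u => Real.log (L - 1 + (1 - u)))) u) * fun u => L - u) := by
    funext v
    simp [gg]
  rw [e]
  refine d.congr_deriv ?_
  have e1 : L - 1 + (1 - u) = L - u := by ring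
  have e2 : L - (1 - u) = L - 1 + u := by ring
  rw [e1] at ha
  rw [e2] at hb
  simp only [Pi.add_apply, Pi.inv_apply, Pi.sub_apply, gg, e1, e2]
  have k : (1 / (2 * L - 1) * (1 / (L - 1 + u) - -1 / (L - u))) = 1 / ((L - 1 + u) * (L - u)) := by
    have : 1 / (L - 1 + u) - -1 / (L - u) = (2 * L - 1) * (1 / ((L - 1 + u) * (L - u))) := by
      field_simp
      ring
    rw [this, ← mul_assoc, one_div_mul_cancel hL2, one_mul]
  rw [k]
  have k2 : (- -1 / (L - u) ^ 2 + 1 / ((L - 1 + u) * (L - u))) * (L - u) =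
      (L - u)⁻¹ + 1 / (L - 1 + u) := by
    field_simp
  rw [k2]
  ring

lemma gg_continuousOn {L : ℝ} (hL : 1 < L) : ContinuousOn (gg L) (Set.Icc 0 1) := by
  unfold gg
  have h1 : ∀ x ∈ Set.Icc (0:ℝ) 1, L - 1 + x ≠ 0 := by
    intro x hx
    have : 0 < L - 1 + x := by linarith [hx.1]
    exact this.ne'
  have h2 : ∀ x ∈ Set.Icc (0:ℝ) 1, L - x ≠ 0 := by
    intro x hx
    have : 0 < L - x := by linarith [hx.2]
    exact this.ne'
  refine ContinuousOn.add (ContinuousOn.div (by fun_prop) (by fun_prop) h1) ?_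
  refine ContinuousOn.mul (by fun_prop) (ContinuousOn.sub ?_ ?_)
  · exact ContinuousOn.log (by fun_prop) h2
  · exact ContinuousOn.log (by fun_prop) h1

lemma gg_integral {L y : ℝ} (hL : 1 < L) (h1 : gg L 1 = 0) (hy : 0 ≤ y) (hy1 : y ≤ 1) :
    ∫ s in (0:ℝ)..(1 - y), gg L s = gg L y * (L - 1 + y) := by
  have hsub : Set.uIcc 0 (1 - y) ⊆ Set.Icc (0:ℝ) 1 := by
    rw [Set.uIcc_of_le (by linarith)]
    exact Set.Icc_subset_Icc le_rfl (by linarith)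
  rw [intervalIntegral.integral_eq_sub_of_hasDerivAt (f := fun u => gg L (1 - u) * (L - u))]
  · have e : 1 - (1 - y) = y := by ring
    simp only [e, sub_zero, h1]
    ring
  · intro x hx
    have := hsub hx
    exact gg_hasDeriv hL this.1 this.2
  · exact ((gg_continuousOn hL).mono hsub).intervalIntegrable

lemma EE_slice (L y : ℝ) (hy : 0 ≤ y) : (fun s => EE L (s, y)) =
    (Set.Icc 0 (1 - y)).indicator (fun s => gg L s + gg L y) := by
  funext s
  unfold EE TT
  by_cases h : s ∈ Set.Icc 0 (1 - y)
  · rw [Set.indicator_of_mem h, Set.indicator_of_mem]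
    refine ⟨h.1, hy, ?_⟩
    have := h.2
    simp only
    linarith
  · rw [Set.indicator_of_notMem h, Set.indicator_of_notMem]
    rintro ⟨h1, h2, h3⟩
    simp only at h1 h3
    exact h ⟨h1, by linarith⟩

lemma EE_slice_integrable {L y : ℝ} (hL : 1 < L) (hy : 0 ≤ y) :
    Integrable (fun s => EE L (s, y)) := by
  rw [EE_slice L y hy, integrable_indicator_iff measurableSet_Icc]
  apply ContinuousOn.integrableOn_compact isCompact_Icc
  exact ((gg_continuousOn hL).mono (Set.Icc_subset_Icc le_rfl (by linarith))).add
    continuousOn_const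

lemma EE_slice_integral {L y : ℝ} (hL : 1 < L) (h1 : gg L 1 = 0) (hy : 0 ≤ y) (hy1 : y ≤ 1) :
    ∫ s, EE L (s, y) = L * gg L y := by
  rw [EE_slice L y hy, integral_indicator measurableSet_Icc, integral_Icc_eq_integral_Ioc,
    ← intervalIntegral.integral_of_le (by linarith), intervalIntegral.integral_add,
    gg_integral hL h1 hy hy1]
  · simp
    ring
  · refine ((gg_continuousOn hL).mono ?_).intervalIntegrable
    rw [Set.uIcc_of_le (by linarith)]
    exact Set.Icc_subset_Icc le_rfl (by linarith)
  · simp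

lemma gg_nonneg {L x : ℝ} (hL : 1 < L) (h1 : gg L 1 = 0) (hx : 0 ≤ x) (hx1 : x ≤ 1) :
    0 ≤ gg L x := h1 ▸ gg_anti hL hx hx1 le_rfl

lemma gg_half {L : ℝ} (hL : 1 < L) (h1 : gg L 1 = 0) : 0 < gg L (1/2) :=
  h1 ▸ gg_strict hL (by norm_num) (by norm_num) le_rfl

lemma sum_ge {L : ℝ} (hL : 1 < L) (h1 : gg L 1 = 0) {p : ℝ × ℝ} (hp : p ∈ TT) :
    gg L (1/2) ≤ gg L p.1 + gg L p.2 := by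
  obtain ⟨a, b, c⟩ := hp
  have n1 := gg_nonneg hL h1 a (by linarith)
  have n2 := gg_nonneg hL h1 b (by linarith)
  rcases le_total p.1 (1/2) with h | h
  · have := gg_anti hL a h (by norm_num)
    linarith
  · have := gg_anti (y := 1/2) hL b (by linarith) (by norm_num)
    linarith

/-- the weight -/
noncomputable def qq (L : ℝ) (p : ℝ × ℝ) : ℝ := L * gg L p.2 / (gg L p.1 + gg L p.2)

lemma qq_bound {L : ℝ} (hL : 1 < L) (h1 : gg L 1 = 0) {p : ℝ × ℝ} (hp : p ∈ TT) :
    0 ≤ qq L p ∧ qq L p ≤ L := by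
  have h := sum_ge hL h1 hp
  have h' := gg_half hL h1
  obtain ⟨a, b, c⟩ := hp
  have n1 := gg_nonneg hL h1 a (by linarith)
  have n2 := gg_nonneg hL h1 b (by linarith)
  unfold qq
  refine ⟨by positivity, ?_⟩
  rw [div_le_iff₀ (by linarith)]
  nlinarith

lemma qq_sum {L : ℝ} (hL : 1 < L) (h1 : gg L 1 = 0) {p : ℝ × ℝ} (hp : p ∈ TT) :
    qq L p + qq L p.swap = L := by
  have h := sum_ge hL h1 hp
  have h' := gg_half hL h1
  have : gg L p.1 + gg L p.2 ≠ 0 := by linarith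
  have e : gg L p.2 + gg L p.1 = gg L p.1 + gg L p.2 := by ring
  unfold qq
  simp only [Prod.fst_swap, Prod.snd_swap]
  rw [e, ← add_div, div_eq_iff this]
  ring

lemma qq_int {L : ℝ} (hL : 1 < L) (h1 : gg L 1 = 0) {f : ℝ × ℝ → ℝ} (hf : MemLp f 2 volume)
    (hs : ∀ p, p ∉ TT → f p = 0) : Integrable (fun p => qq L p * f p ^ 2) := by
  have hi := hf.integrable_sq
  have hm : Measurable (qq L) := by
    unfold qq
    have := measurable_gg L
    fun_prop
  refine (hi.const_mul L).mono' (hm.aestronglyMeasurable.mul hi.aestronglyMeasurable) ?_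
  refine Filter.Eventually.of_forall fun p => ?_
  by_cases hp : p ∈ TT
  · obtain ⟨b1, b2⟩ := qq_bound hL h1 hp
    rw [Real.norm_eq_abs, abs_of_nonneg (by positivity)]
    exact mul_le_mul_of_nonneg_right b2 (by positivity)
  · simp [hs p hp]

/-- Cauchy-Schwarz on slices. -/
lemma slice_ineq {L : ℝ} (hL : 1 < L) (h1 : gg L 1 = 0) {f : ℝ × ℝ → ℝ}
    (hs : ∀ p, p ∉ TT → f p = 0) {y : ℝ} (hy1 : y ≠ 1)
    (hm : AEStronglyMeasurable (fun s => f (s, y)) volume)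
    (hi : Integrable (fun s => f (s, y) ^ 2)) :
    (∫ s, f (s, y)) ^ 2 ≤ ∫ s, qq L (s, y) * f (s, y) ^ 2 := by
  by_cases hy : 0 ≤ y ∧ y < 1
  swap
  · have : ∀ s, f (s, y) = 0 := by
      intro s
      apply hs
      rintro ⟨a, b, c⟩
      simp only at a b c
      apply hy
      refine ⟨b, lt_of_le_of_ne (by linarith) hy1⟩
    simp [this]
  obtain ⟨hy, hy'⟩ := hy
  have hg : 0 < gg L y := h1 ▸ gg_strict hL hy hy' le_rfl
  have hC := EE_slice_integral hL h1 hy hy'.le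
  have hCi := EE_slice_integrable hL hy
  have hhalf := gg_half hL h1
  set r : ℝ → ℝ := fun s => f (s, y) ^ 2 / (gg L s + gg L y) with hr
  have hri : Integrable r := by
    refine (hi.const_mul (1 / gg L (1/2))).mono' ?_ ?_
    · have := measurable_gg L
      exact hi.aestronglyMeasurable.div₀
        (Measurable.aestronglyMeasurable (by fun_prop))
    · refine Filter.Eventually.of_forall fun s => ?_
      by_cases hp : (s, y) ∈ TT
      · have := sum_ge hL h1 hp
        simp only at this
        have h2 : 0 < gg L s + gg L y := by linarith
        rw [Real.norm_eq_abs, abs_of_nonneg (by positivity), hr]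
        simp only
        rw [div_eq_mul_one_div, mul_comm]
        exact mul_le_mul_of_nonneg_right (one_div_le_one_div_of_le hhalf this) (by positivity)
      · simp [hr, hs _ hp]
  have hB : ∫ s, qq L (s, y) * f (s, y) ^ 2 = L * gg L y * ∫ s, r s := by
    rw [← integral_const_mul]
    congr 1
    funext s
    simp only [qq, hr]
    ring
  rw [hB]
  have hfi : Integrable (fun s => f (s, y)) := by
    refine (hri.add hCi).mono' hm ?_
    refine Filter.Eventually.of_forall fun s => ?_
    by_cases hp : (s, y) ∈ TT
    · have := sum_ge hL h1 hp
      simp only at this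
      have h2 : 0 < gg L s + gg L y := by linarith
      simp only [Pi.add_apply, hr, EE, Set.indicator_of_mem hp]
      rw [Real.norm_eq_abs, ← sq_abs, div_add' _ _ _ h2.ne', le_div_iff₀ h2]
      nlinarith [sq_nonneg (|f (s, y)| - (gg L s + gg L y)), abs_nonneg (f (s, y)),
        mul_nonneg (abs_nonneg (f (s, y))) h2.le]
    · simp [hr, hs _ hp, EE, Set.indicator_of_notMem hp]
  set A := ∫ s, f (s, y)
  have key : ∀ t : ℝ, 2 * t * A ≤ (∫ s, r s) + t ^ 2 * (L * gg L y) := by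
    intro t
    rw [← hC, ← integral_const_mul, ← integral_const_mul, ← integral_add hri (hCi.const_mul _)]
    refine integral_mono (hfi.const_mul _) (hri.add (hCi.const_mul _)) fun s => ?_
    by_cases hp : (s, y) ∈ TT
    · have := sum_ge hL h1 hp
      simp only at this
      have h2 : 0 < gg L s + gg L y := by linarith
      simp only [hr, EE, Set.indicator_of_mem hp, Pi.add_apply]
      rw [div_add' _ _ _ h2.ne', le_div_iff₀ h2]
      nlinarith [sq_nonneg (f (s, y) - t * (gg L s + gg L y))]
    · simp [hr, hs _ hp, EE, Set.indicator_of_notMem hp]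
  have hCpos : 0 < L * gg L y := by positivity
  have := key (A / (L * gg L y))
  set C := L * gg L y
  have e : 2 * (A / C) * A = 2 * (A ^ 2 / C) := by ring
  have e2 : (A / C) ^ 2 * C = A ^ 2 / C := by field_simp
  rw [e, e2] at this
  have h3 : A ^ 2 / C ≤ ∫ s, r s := by linarith
  rw [div_le_iff₀ hCpos] at h3
  linarith

lemma one_side {L : ℝ} (hL : 1 < L) (h1 : gg L 1 = 0) {f : ℝ × ℝ → ℝ} (hf : MemLp f 2 volume)
    (hs : ∀ p, p ∉ TT → f p = 0) :
    ∫ y, (∫ s, f (s, y)) ^ 2 ≤ ∫ p, qq L p * f p ^ 2 := by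
  have hq := qq_int hL h1 hf hs
  have hi := hf.integrable_sq
  rw [Measure.volume_eq_prod] at hq hi ⊢
  rw [integral_prod_symm _ hq]
  refine integral_mono_of_nonneg (Filter.Eventually.of_forall fun y => sq_nonneg _)
    hq.integral_prod_right ?_
  have hm := hf.aestronglyMeasurable
  rw [Measure.volume_eq_prod] at hm
  have hm2 := hm.prod_swap.prodMk_left
  filter_upwards [hi.prod_left_ae, hm2, Measure.ae_ne volume (1:ℝ)] with y a b c
  exact slice_ineq hL h1 hs c b a

lemma one_side_eq {L : ℝ} (hL : 1 < L) (h1 : gg L 1 = 0) (hf : MemLp (EE L) 2 volume) :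
    ∫ y, (∫ s, EE L (s, y)) ^ 2 = ∫ p, qq L p * EE L p ^ 2 := by
  have hs : ∀ p, p ∉ TT → EE L p = 0 := fun p hp => by simp [EE, Set.indicator_of_notMem hp]
  have hq := qq_int hL h1 hf hs
  rw [Measure.volume_eq_prod] at hq ⊢
  rw [integral_prod_symm _ hq]
  congr 1
  funext y
  by_cases hy : 0 ≤ y ∧ y ≤ 1
  · obtain ⟨hy, hy'⟩ := hy
    have hC := EE_slice_integral hL h1 hy hy'
    have : ∀ s, qq L (s, y) * EE L (s, y) ^ 2 = L * gg L y * EE L (s, y) := by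
      intro s
      by_cases hp : (s, y) ∈ TT
      · have := sum_ge hL h1 hp
        have := gg_half hL h1
        have h2 : gg L s + gg L y ≠ 0 := by
          simp only at *
          linarith
        simp only [qq, EE, Set.indicator_of_mem hp]
        field_simp
      · simp [hs _ hp]
    simp only [this]
    rw [integral_const_mul, hC]
    ring
  · have : ∀ s, EE L (s, y) = 0 := by
      intro s
      apply hs
      rintro ⟨a, b, c⟩
      simp only at a b c
      exact hy ⟨b, by linarith⟩
    simp [this]

lemma memLp_EE {L : ℝ} (hL : 1 < L) (h1 : gg L 1 = 0) : MemLp (EE L) 2 volume := by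
  have hfin : volume TT < ⊤ := by
    refine lt_of_le_of_lt (measure_mono (t := Set.Icc (0:ℝ) 1 ×ˢ Set.Icc (0:ℝ) 1) ?_) ?_
    · rintro p ⟨a, b, c⟩
      exact ⟨⟨a, by linarith⟩, ⟨b, by linarith⟩⟩
    · exact (isCompact_Icc.prod isCompact_Icc).measure_lt_top
  have : Fact (volume TT < ⊤) := ⟨hfin⟩
  have e : EE L = TT.indicator (fun p => gg L p.1 + gg L p.2) := rfl
  rw [e, memLp_indicator_iff_restrict measurableSet_TT]
  have := measurable_gg L
  refine MemLp.of_bound (Measurable.aestronglyMeasurable (by fun_prop)) (2 * gg L 0) ?_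
  refine (ae_restrict_iff' measurableSet_TT).2 (Filter.Eventually.of_forall ?_)
  rintro p ⟨a, b, c⟩
  have n1 := gg_nonneg hL h1 a (by linarith)
  have n2 := gg_nonneg hL h1 b (by linarith)
  have m1 := gg_anti hL le_rfl a (by linarith)
  have m2 := gg_anti hL le_rfl b (by linarith)
  rw [Real.norm_eq_abs, abs_of_nonneg (by linarith)]
  linarith

lemma swap_TT {p : ℝ × ℝ} : p.swap ∈ TT ↔ p ∈ TT := by
  unfold TT
  simp only [Set.mem_ofPred_eq, Prod.fst_swap, Prod.snd_swap]
  constructor <;> rintro ⟨a, b, c⟩ <;> exact ⟨b, a, by linarith⟩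

lemma mp_swap : MeasurePreserving (Prod.swap : ℝ × ℝ → ℝ × ℝ) volume volume :=
  Measure.measurePreserving_swap

lemma integral_swap' (h : ℝ × ℝ → ℝ) : ∫ p : ℝ × ℝ, h p.swap = ∫ p, h p :=
  mp_swap.integral_comp (MeasurableEquiv.prodComm : ℝ × ℝ ≃ᵐ ℝ × ℝ).measurableEmbedding h

lemma sum_sides {L : ℝ} (hL : 1 < L) (h1 : gg L 1 = 0) {f : ℝ × ℝ → ℝ} (hf : MemLp f 2 volume)
    (hs : ∀ p, p ∉ TT → f p = 0) :
    (∫ p, qq L p * f p ^ 2) + (∫ p : ℝ × ℝ, qq L p * f p.swap ^ 2) = L * ∫ p, f p ^ 2 := by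
  have hf' : MemLp (fun p : ℝ × ℝ => f p.swap) 2 volume := hf.comp_measurePreserving mp_swap
  have hs' : ∀ p : ℝ × ℝ, p ∉ TT → f p.swap = 0 := fun p hp => hs _ (fun h => hp (swap_TT.1 h))
  have i2 : Integrable (fun p : ℝ × ℝ => qq L p.swap * f p.swap.swap ^ 2) volume :=
    mp_swap.integrable_comp_of_integrable (qq_int hL h1 hf' hs')
  rw [← integral_swap' (fun p : ℝ × ℝ => qq L p * f p.swap ^ 2),
    ← integral_add (qq_int hL h1 hf hs) i2, ← integral_const_mul]
  congr 1
  funext p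
  by_cases hp : p ∈ TT
  · have := qq_sum hL h1 hp
    simp only [Prod.swap_swap]
    rw [← add_mul, this]
  · simp [hs p hp]

lemma upper {L : ℝ} (hL : 1 < L) (h1 : gg L 1 = 0) {f : ℝ × ℝ → ℝ} (hf : MemLp f 2 volume)
    (hs : ∀ p, p ∉ TT → f p = 0) :
    (∫ y, (∫ s, f (s, y)) ^ 2) + (∫ x, (∫ s, f (x, s)) ^ 2) ≤ L * ∫ p, f p ^ 2 := by
  rw [← sum_sides hL h1 hf hs]
  have hf' : MemLp (fun p : ℝ × ℝ => f p.swap) 2 volume := hf.comp_measurePreserving mp_swap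
  have hs' : ∀ p : ℝ × ℝ, p ∉ TT → f p.swap = 0 := fun p hp => hs _ (fun h => hp (swap_TT.1 h))
  exact add_le_add (one_side hL h1 hf hs) (one_side hL h1 hf' hs')

lemma EE_swap (L : ℝ) (p : ℝ × ℝ) : EE L p.swap = EE L p := by
  unfold EE
  by_cases hp : p ∈ TT
  · rw [Set.indicator_of_mem hp, Set.indicator_of_mem (swap_TT.2 hp)]
    simp [add_comm]
  · rw [Set.indicator_of_notMem hp, Set.indicator_of_notMem (fun h => hp (swap_TT.1 h))]

lemma attained {L : ℝ} (hL : 1 < L) (h1 : gg L 1 = 0) :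
    (∫ y, (∫ s, EE L (s, y)) ^ 2) + (∫ x, (∫ s, EE L (x, s)) ^ 2) = L * ∫ p, EE L p ^ 2 := by
  have hs : ∀ p, p ∉ TT → EE L p = 0 := fun p hp => by simp [EE, Set.indicator_of_notMem hp]
  have hf := memLp_EE hL h1
  rw [← sum_sides hL h1 hf hs]
  simp only [EE_swap]
  have : ∀ x s, EE L (x, s) = EE L (s, x) := fun x s => EE_swap L (s, x)
  have e : (∫ x, (∫ s, EE L (x, s)) ^ 2) = ∫ x, (∫ s, EE L (s, x)) ^ 2 := by
    congr 1
    funext x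
    congr 2
    funext s
    exact this x s
  rw [e, one_side_eq hL h1 hf]

lemma EE_ne {L : ℝ} (hL : 1 < L) (h1 : gg L 1 = 0) : ¬ (EE L =ᵐ[volume] 0) := by
  intro h
  have hz : volume (Set.Ioo (0:ℝ) (1/2) ×ˢ Set.Ioo (0:ℝ) (1/2)) = 0 := by
    refine measure_mono_null ?_ (ae_iff.1 h)
    rintro p ⟨⟨a, b⟩, ⟨c, d⟩⟩
    have hp : p ∈ TT := ⟨a.le, c.le, by linarith⟩
    have := sum_ge hL h1 hp
    have := gg_half hL h1
    simp only [Set.mem_ofPred_eq, EE, Set.indicator_of_mem hp, Pi.zero_apply]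
    linarith
  rw [Measure.volume_eq_prod, Measure.prod_prod] at hz
  simp [Real.volume_Ioo] at hz

lemma mem_simplex_iff (t : Fin 2 → ℝ) : t ∈ simplex 2 1 ↔ (t 0, t 1) ∈ TT := by
  simp [simplex, TT, Fin.forall_fin_two, and_assoc]

lemma sieveI_eq {F : (Fin 2 → ℝ) → ℝ} (hF : ∀ t, t ∉ simplex 2 1 → F t = 0) :
    sieveI F = ∫ p : ℝ × ℝ, F ![p.1, p.2] ^ 2 := by
  unfold sieveI
  rw [setIntegral_eq_integral_of_forall_compl_eq_zero]
  · rw [← (volume_preserving_finTwoArrow ℝ).symm.integral_comp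
      (MeasurableEquiv.finTwoArrow (α := ℝ)).symm.measurableEmbedding]
    rfl
  · intro t ht
    rw [hF t (fun h => ht h.1)]
    simp

lemma sieveJ0_eq {F : (Fin 2 → ℝ) → ℝ} (hF : ∀ t, t ∉ simplex 2 1 → F t = 0) :
    sieveJ 0 F = ∫ y : ℝ, (∫ s : ℝ, F ![s, y]) ^ 2 := by
  unfold sieveJ
  have inner : ∀ y : {j : Fin 2 // j ≠ 0} → ℝ,
      (∫ s in Set.Ioi (0 : ℝ), F (fun j => if h : j = 0 then s else y ⟨j, h⟩)) =
      ∫ s : ℝ, F (fun j => if h : j = 0 then s else y ⟨j, h⟩) := by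
    intro y
    rw [← integral_Ici_eq_integral_Ioi, setIntegral_eq_integral_of_forall_compl_eq_zero]
    intro s hs
    apply hF
    intro h
    have := h.1 0
    simp only [dite_true] at this
    exact hs this
  simp only [inner]
  rw [setIntegral_eq_integral_of_forall_compl_eq_zero]
  · let u : Unique {j : Fin 2 // j ≠ 0} :=
      { default := ⟨1, by decide⟩
        uniq := by decide }
    have mp := volume_preserving_funUnique {j : Fin 2 // j ≠ 0} ℝ
    rw [Subsingleton.elim (Unique.fintype : Fintype {j : Fin 2 // j ≠ 0}) (Subtype.fintype _)] at mp
    rw [← mp.symm.integral_comp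
      (MeasurableEquiv.funUnique {j : Fin 2 // j ≠ 0} ℝ).symm.measurableEmbedding]
    congr 1
    funext y
    congr 2
    funext s
    congr 1
    funext j
    fin_cases j <;> rfl
  · intro y hy
    have : ∀ s : ℝ, F (fun j => if h : j = 0 then s else y ⟨j, h⟩) = 0 := by
      intro s
      apply hF
      intro h
      apply hy
      rintro ⟨j, hj⟩
      have := h.1 j
      simpa only [dif_neg hj] using this
    simp [this]

lemma sieveJ1_eq {F : (Fin 2 → ℝ) → ℝ} (hF : ∀ t, t ∉ simplex 2 1 → F t = 0) :
    sieveJ 1 F = ∫ y : ℝ, (∫ s : ℝ, F ![y, s]) ^ 2 := by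
  unfold sieveJ
  have inner : ∀ y : {j : Fin 2 // j ≠ 1} → ℝ,
      (∫ s in Set.Ioi (0 : ℝ), F (fun j => if h : j = 1 then s else y ⟨j, h⟩)) =
      ∫ s : ℝ, F (fun j => if h : j = 1 then s else y ⟨j, h⟩) := by
    intro y
    rw [← integral_Ici_eq_integral_Ioi, setIntegral_eq_integral_of_forall_compl_eq_zero]
    intro s hs
    apply hF
    intro h
    have := h.1 1
    simp only [dite_true] at this
    exact hs this
  simp only [inner]
  rw [setIntegral_eq_integral_of_forall_compl_eq_zero]
  · let u : Unique {j : Fin 2 // j ≠ 1} :=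
      { default := ⟨0, by decide⟩
        uniq := by decide }
    have mp := volume_preserving_funUnique {j : Fin 2 // j ≠ 1} ℝ
    rw [Subsingleton.elim (Unique.fintype : Fintype {j : Fin 2 // j ≠ 1}) (Subtype.fintype _)] at mp
    rw [← mp.symm.integral_comp
      (MeasurableEquiv.funUnique {j : Fin 2 // j ≠ 1} ℝ).symm.measurableEmbedding]
    congr 1
    funext y
    congr 2
    funext s
    congr 1
    funext j
    fin_cases j <;> rfl
  · intro y hy
    have : ∀ s : ℝ, F (fun j => if h : j = 1 then s else y ⟨j, h⟩) = 0 := by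
      intro s
      apply hF
      intro h
      apply hy
      rintro ⟨j, hj⟩
      have := h.1 j
      simpa only [dif_neg hj] using this
    simp [this]

theorem M2_eq (w : ℝ) (hw : 0 < w) (hlambert : w * Real.exp w = Real.exp (-1)) :
    Mquant 2 = 1 / (1 - w) := by
  have hw1 : w < 1 := by
    by_contra! h
    have h2 : Real.exp (-1) < 1 := by
      rw [Real.exp_lt_one_iff]
      norm_num
    have h3 : 1 ≤ Real.exp w := Real.one_le_exp hw.le
    nlinarith
  have hlog : Real.log w = -1 - w := by
    have := congrArg Real.log hlambert
    rw [Real.log_mul hw.ne' (Real.exp_pos _).ne', Real.log_exp, Real.log_exp] at this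
    linarith
  have hd : 0 < 1 - w := by linarith
  obtain ⟨L, hLdef⟩ : ∃ L, L = 1 / (1 - w) := ⟨_, rfl⟩
  rw [← hLdef]
  have hL : 1 < L := by
    rw [hLdef, lt_div_iff₀ hd]
    linarith
  have h1 : gg L 1 = 0 := by
    apply gg_one hL
    have : L - 1 = w * L := by
      rw [hLdef]
      field_simp
      ring
    rw [this, Real.log_mul hw.ne' (by linarith), hlog]
    linarith
  unfold Mquant
  apply IsGreatest.csSup_eq
  constructor
  · have hs : ∀ t, t ∉ simplex 2 1 → EE L (t 0, t 1) = 0 := by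
      intro t ht
      rw [mem_simplex_iff] at ht
      simp [EE, Set.indicator_of_notMem ht]
    have mp := volume_preserving_finTwoArrow ℝ
    refine ⟨fun t => EE L (t 0, t 1), (memLp_EE hL h1).comp_measurePreserving mp, hs, ?_, ?_⟩
    · intro h
      apply EE_ne hL h1
      exact (volume_preserving_finTwoArrow ℝ).symm.quasiMeasurePreserving.ae_eq_comp h
    · rw [Fin.sum_univ_two, sieveJ0_eq hs, sieveJ1_eq hs, sieveI_eq hs]
      simp only [Matrix.cons_val_zero, Matrix.cons_val_one]
      rw [attained hL h1, mul_div_assoc, div_self, mul_one]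
      intro h0
      apply EE_ne hL h1
      have := (integral_eq_zero_iff_of_nonneg (fun p => sq_nonneg _)
        (memLp_EE hL h1).integrable_sq).1 h0
      filter_upwards [this] with p hp
      simpa using hp
  · rintro r ⟨F, hF, hs, -, rfl⟩
    rw [Fin.sum_univ_two, sieveJ0_eq hs, sieveJ1_eq hs, sieveI_eq hs]
    refine div_le_of_le_mul₀ (integral_nonneg fun p => sq_nonneg _) (by linarith) ?_
    refine upper (f := fun p => F ![p.1, p.2]) hL h1 ?_ ?_
    · exact hF.comp_measurePreserving (volume_preserving_finTwoArrow ℝ).symm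
    · intro p hp
      apply hs
      rw [mem_simplex_iff]
      exact hp
end

section
/- For every integer k ≥ 2 one has M_k ≤ (k/(k−1))·log k; equivalently, for every square-integrable F : [0,∞)^k → ℝ supported on R_k, ∑_{i=1}^k J_i(F) ≤ (k/(k−1))·(log k)·I(F). -/
open MeasureTheory

lemma cs_one_dim (K a : ℝ) (hK : 1 < K) (f : ℝ → ℝ) (hf : ∀ s, 0 < s → a < s → f s = 0)
    (hi : IntegrableOn (fun s => f s ^ 2 * (a + (K - 1) * s)) (Set.Ioi 0)) :
    (∫ s in Set.Ioi (0 : ℝ), f s) ^ 2 ≤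
      Real.log K / (K - 1) * ∫ s in Set.Ioi (0 : ℝ), f s ^ 2 * (a + (K - 1) * s) := by
  have hK1 : 0 < K - 1 := by linarith
  have hlog : 0 < Real.log K := Real.log_pos hK
  have hL : 0 < Real.log K / (K - 1) := by positivity
  rcases le_or_gt a 0 with ha | ha
  · have h0 : ∀ s ∈ Set.Ioi (0 : ℝ), f s = 0 := fun s hs => hf s hs (lt_of_le_of_lt ha hs)
    have e1 : ∫ s in Set.Ioi (0 : ℝ), f s = 0 := by
      rw [setIntegral_congr_fun measurableSet_Ioi h0]; simp
    have e2 : ∫ s in Set.Ioi (0 : ℝ), f s ^ 2 * (a + (K - 1) * s) = 0 := by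
      rw [setIntegral_congr_fun (g := fun _ => (0 : ℝ)) measurableSet_Ioi
        (fun s hs => by simp [h0 s hs])]
      simp
    rw [e1, e2]; simp
  by_cases hfi : IntegrableOn f (Set.Ioi 0)
  swap
  · rw [integral_undef hfi]
    have : 0 ≤ ∫ s in Set.Ioi (0 : ℝ), f s ^ 2 * (a + (K - 1) * s) := by
      refine setIntegral_nonneg measurableSet_Ioi fun s hs => ?_
      have hs' : (0 : ℝ) < s := hs
      positivity
    simp only [ne_eq, OfNat.ofNat_ne_zero, not_false_eq_true, zero_pow]
    positivity
  have hsub : Set.Ioc 0 a ⊆ Set.Ioi (0 : ℝ) := fun s hs => hs.1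
  have r1 : ∫ s in Set.Ioi (0 : ℝ), f s = ∫ s in Set.Ioc 0 a, f s := by
    refine (setIntegral_eq_of_subset_of_forall_sdiff_eq_zero measurableSet_Ioi hsub ?_)
    rintro s ⟨hs, hs2⟩
    exact hf s hs (by by_contra h; exact hs2 ⟨hs, not_lt.1 h⟩)
  have r2 : ∫ s in Set.Ioi (0 : ℝ), f s ^ 2 * (a + (K - 1) * s) =
      ∫ s in Set.Ioc 0 a, f s ^ 2 * (a + (K - 1) * s) := by
    refine (setIntegral_eq_of_subset_of_forall_sdiff_eq_zero measurableSet_Ioi hsub ?_)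
    rintro s ⟨hs, hs2⟩
    rw [hf s hs (by by_contra h; exact hs2 ⟨hs, not_lt.1 h⟩)]; simp
  have hfi' := hfi.mono_set hsub
  have hi' := hi.mono_set hsub
  rw [r1, r2]
  have hpos : ∀ s ∈ Set.Icc 0 a, 0 < a + (K - 1) * s := fun s hs => by
    have := hs.1; positivity
  have hci : IntegrableOn (fun s => (a + (K - 1) * s)⁻¹) (Set.Ioc 0 a) := by
    refine (ContinuousOn.integrableOn_Icc ?_).mono_set Set.Ioc_subset_Icc_self
    refine ContinuousOn.inv₀ (by fun_prop) fun s hs => (hpos s hs).ne'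
  have hcv : ∫ s in Set.Ioc 0 a, (a + (K - 1) * s)⁻¹ = Real.log K / (K - 1) := by
    rw [← intervalIntegral.integral_of_le ha.le,
      intervalIntegral.integral_comp_add_mul (fun x : ℝ => x⁻¹) hK1.ne', integral_inv_of_pos
        (by simpa using ha) (by positivity)]
    have : (a + (K - 1) * a) / (a + (K - 1) * 0) = K := by field_simp; ring
    rw [this, smul_eq_mul, div_eq_inv_mul]
  set L := Real.log K / (K - 1) with hLd
  set A := ∫ s in Set.Ioc 0 a, f s with hA
  set B := ∫ s in Set.Ioc 0 a, f s ^ 2 * (a + (K - 1) * s) with hB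
  have key : ∫ s in Set.Ioc 0 a, (2 * A / L) * f s ≤
      ∫ s in Set.Ioc 0 a, (f s ^ 2 * (a + (K - 1) * s) + (A ^ 2 / L ^ 2) * (a + (K - 1) * s)⁻¹) := by
    refine setIntegral_mono_on (hfi'.const_mul _) (hi'.add (hci.const_mul _)) measurableSet_Ioc ?_
    intro s hs
    have hw := hpos s ⟨hs.1.le, hs.2⟩
    set w := a + (K - 1) * s
    have : f s ^ 2 * w + A ^ 2 / L ^ 2 * w⁻¹ - 2 * A / L * f s = (f s * w - A / L) ^ 2 / w := by
      field_simp; ring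
    have h2 : 0 ≤ (f s * w - A / L) ^ 2 / w := by positivity
    linarith
  rw [integral_const_mul, integral_add hi' (hci.const_mul _), integral_const_mul, hcv,
    ← hA, ← hB] at key
  have e : 2 * A / L * A = 2 * (A ^ 2 / L) := by ring
  have e' : A ^ 2 / L ^ 2 * L = A ^ 2 / L := by field_simp
  rw [e, e'] at key
  have : A ^ 2 / L ≤ B := by linarith
  rw [div_le_iff₀ hL] at this
  linarith

/-- Joining one coordinate with the others. -/
noncomputable def joinEquiv {k : ℕ} (i : Fin k) :
    (({j : Fin k // j ≠ i} → ℝ) × ℝ) ≃ᵐ (Fin k → ℝ) :=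
  (MeasurableEquiv.prodComm.trans
    (MeasurableEquiv.prodCongr (MeasurableEquiv.funUnique {j : Fin k // j = i} ℝ).symm
      (MeasurableEquiv.refl ({j : Fin k // j ≠ i} → ℝ)))).trans
    (MeasurableEquiv.piEquivPiSubtypeProd (fun _ : Fin k => ℝ) (fun j => j = i)).symm

lemma joinEquiv_apply {k : ℕ} (i : Fin k) (y : {j : Fin k // j ≠ i} → ℝ) (s : ℝ) :
    joinEquiv i (y, s) = fun j => if h : j = i then s else y ⟨j, h⟩ := by
  ext j
  rfl

lemma joinEquiv_mp {k : ℕ} (i : Fin k) :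
    MeasurePreserving (joinEquiv i) (volume.prod volume) volume := by
  have h1 := (volume_preserving_piEquivPiSubtypeProd (fun _ : Fin k => ℝ) (fun j => j = i)).symm
  have h2 := (volume_preserving_funUnique {j : Fin k // j = i} ℝ).symm
  have h3 := h2.prod (MeasurePreserving.id (volume : Measure ({j : Fin k // j ≠ i} → ℝ)))
  have h4 := h3.comp (Measure.measurePreserving_swap
    (μ := (volume : Measure ({j : Fin k // j ≠ i} → ℝ))) (ν := (volume : Measure ℝ)))
  refine h1.comp ?_
  convert h4 using 1
  · rfl
  · rw [Measure.volume_eq_prod]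
    congr! 4

lemma join_sum {k : ℕ} (i : Fin k) (y : {j : Fin k // j ≠ i} → ℝ) (s : ℝ) :
    ∑ j, (fun j => if h : j = i then s else y ⟨j, h⟩) j = s + ∑ j, y j := by
  rw [Fintype.sum_eq_add_sum_subtype_ne _ i]
  congr 1
  · simp
  · exact Finset.sum_congr rfl fun j _ => by simp [j.2]

lemma weight_integrable {k : ℕ} (i : Fin k) (F : (Fin k → ℝ) → ℝ) (hF : MemLp F 2 volume)
    (hs : ∀ t, t ∉ simplex k 1 → F t = 0) :
    Integrable (fun t => F t ^ 2 * (1 - ∑ j, t j + k * t i)) := by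
  have h2 := hF.integrable_sq
  refine (h2.const_mul (1 + k : ℝ)).mono
    (h2.aestronglyMeasurable.mul (by fun_prop)) (Filter.Eventually.of_forall fun t => ?_)
  by_cases ht : t ∈ simplex k 1
  · have h1 : t i ≤ ∑ j, t j := Finset.single_le_sum (fun j _ => ht.1 j) (Finset.mem_univ i)
    have h3 := ht.1 i
    have h4 := ht.2
    have hk : (0 : ℝ) ≤ k := by positivity
    have h5 : (k : ℝ) * t i ≤ k := by nlinarith
    have h6 : 0 ≤ (k : ℝ) * t i := by positivity
    rw [Real.norm_of_nonneg (mul_nonneg (sq_nonneg _) (by linarith)),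
      Real.norm_of_nonneg (by positivity), mul_comm]
    exact mul_le_mul_of_nonneg_right (by linarith) (sq_nonneg _)
  · simp [hs t ht]

lemma sieveJ_le {k : ℕ} (hk : 2 ≤ k) (i : Fin k) (F : (Fin k → ℝ) → ℝ) (hF : MemLp F 2 volume)
    (hs : ∀ t, t ∉ simplex k 1 → F t = 0) :
    sieveJ i F ≤ Real.log k / ((k : ℝ) - 1) *
      ∫ t, F t ^ 2 * (1 - ∑ j, t j + k * t i) := by
  have hk1 : (1 : ℝ) < k := by exact_mod_cast hk
  set H : (Fin k → ℝ) → ℝ := fun t => F t ^ 2 * (1 - ∑ j, t j + k * t i) with hH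
  have hHi : Integrable H := weight_integrable i F hF hs
  have hHs : ∀ t, t ∉ simplex k 1 → H t = 0 := fun t ht => by simp [hH, hs t ht]
  have hc : Integrable (fun p => H (joinEquiv i p)) (volume.prod volume) :=
    (joinEquiv_mp i).integrable_comp_of_integrable hHi
  have e1 : ∫ t, H t = ∫ y, ∫ s, H (joinEquiv i (y, s)) := by
    rw [← (joinEquiv_mp i).integral_comp (joinEquiv i).measurableEmbedding, integral_prod _ hc]
  have e2 : ∀ y, ∫ s, H (joinEquiv i (y, s)) = ∫ s in Set.Ioi (0 : ℝ), H (joinEquiv i (y, s)) := by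
    intro y
    rw [← integral_Ici_eq_integral_Ioi]
    refine (setIntegral_eq_integral_of_forall_compl_eq_zero fun s hs' => hHs _ fun h => hs' ?_).symm
    have := h.1 i
    rw [joinEquiv_apply] at this
    simpa using this
  have e3 : ∫ t, H t = ∫ y in {y : {j : Fin k // j ≠ i} → ℝ | ∀ j, 0 ≤ y j},
      ∫ s in Set.Ioi (0 : ℝ), H (joinEquiv i (y, s)) := by
    rw [e1]
    simp_rw [e2]
    refine (setIntegral_eq_integral_of_forall_compl_eq_zero fun y hy => ?_).symm
    have : ∀ s, H (joinEquiv i (y, s)) = 0 := fun s => hHs _ fun h => hy fun j => by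
      have := h.1 j.1
      rw [joinEquiv_apply] at this
      simpa [j.2] using this
    simp [this]
  have hint : Integrable (fun y => ∫ s in Set.Ioi (0 : ℝ), H (joinEquiv i (y, s))) := by
    simp_rw [← e2]
    exact hc.integral_prod_left
  rw [e3, ← integral_const_mul]
  unfold sieveJ
  refine integral_mono_of_nonneg (Filter.Eventually.of_forall fun y => sq_nonneg _)
    (hint.integrableOn.const_mul _) ?_
  have hae := ae_restrict_of_ae (s := {y : {j : Fin k // j ≠ i} → ℝ | ∀ j, 0 ≤ y j})
    hc.prod_right_ae
  filter_upwards [hae] with y hy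
  have hw : ∀ s, H (joinEquiv i (y, s)) =
      F (fun j => if h : j = i then s else y ⟨j, h⟩) ^ 2 * ((1 - ∑ j, y j) + ((k : ℝ) - 1) * s) := by
    intro s
    rw [joinEquiv_apply, hH]
    beta_reduce
    rw [join_sum]
    simp only [dite_true]
    ring
  simp_rw [hw] at hy ⊢
  refine cs_one_dim k (1 - ∑ j, y j) hk1 _ (fun s _ hs2 => hs _ fun h => ?_) hy.integrableOn
  have := h.2
  rw [join_sum] at this
  linarith

lemma sum_bound (k : ℕ) (hk : 2 ≤ k) (F : (Fin k → ℝ) → ℝ) (hF : MemLp F 2 volume)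
    (hs : ∀ t, t ∉ simplex k 1 → F t = 0) :
    ∑ i, sieveJ i F ≤ (k : ℝ) / ((k : ℝ) - 1) * Real.log k * sieveI F := by
  refine (Finset.sum_le_sum fun i _ => sieveJ_le hk i F hF hs).trans_eq ?_
  rw [← Finset.mul_sum, ← integral_finsetSum _ fun i _ => weight_integrable i F hF hs]
  have : ∀ t : Fin k → ℝ, ∑ i, F t ^ 2 * (1 - ∑ j, t j + k * t i) = k * F t ^ 2 := by
    intro t
    rw [← Finset.mul_sum, Finset.sum_add_distrib, ← Finset.mul_sum]
    simp
    ring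
  simp_rw [this]
  rw [integral_const_mul]
  unfold sieveI
  rw [setIntegral_eq_integral_of_forall_compl_eq_zero fun t ht => by
    rw [hs t fun h => ht h.1]; simp]
  ring

/-- **Polymath8b, Corollary 6.4**: `M_k ≤ (k/(k-1)) log k` for every `k ≥ 2`;
equivalently, `∑ᵢ J_i(F) ≤ (k/(k-1)) (log k) I(F)` for every square-integrable `F`
supported on `R_k`. -/
theorem Mk_upper_bound (k : ℕ) (hk : 2 ≤ k) :
    Mquant k ≤ (k : ℝ) / ((k : ℝ) - 1) * Real.log k ∧
    ∀ F : (Fin k → ℝ) → ℝ, MemLp F 2 volume → (∀ t, t ∉ simplex k 1 → F t = 0) →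
      ∑ i, sieveJ i F ≤ (k : ℝ) / ((k : ℝ) - 1) * Real.log k * sieveI F := by
  refine ⟨?_, sum_bound k hk⟩
  have hk1 : (1 : ℝ) < k := by exact_mod_cast hk
  have hlog : 0 < Real.log k := Real.log_pos hk1
  have hc : 0 ≤ (k : ℝ) / ((k : ℝ) - 1) * Real.log k :=
    mul_nonneg (div_nonneg (by linarith) (by linarith)) hlog.le
  refine Real.sSup_le ?_ hc
  rintro r ⟨F, hF, hs, -, rfl⟩
  exact div_le_of_le_mul₀ (integral_nonneg fun t => sq_nonneg _) hc (sum_bound k hk F hF hs)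
end

section
/- For any integer r ≥ 1 and any positive real numbers t_1, …, t_r, one has 1/(t_1 ⋯ t_r) = ∑_{σ ∈ S_r} ∏_{i=1}^r (∑_{j=i}^r t_{σ(j)})^{−1}, where the sum is over all permutations σ of {1,…,r}. -/
theorem inv_prod_eq_sum_perm_aux (r : ℕ) : ∀ (t : Fin r → ℝ) (_ : ∀ i, 0 < t i),
    (∏ i, t i)⁻¹ = ∑ σ : Equiv.Perm (Fin r), ∏ i, (∑ j ∈ Finset.Ici i, t (σ j))⁻¹ := by
  induction r with
  | zero => intro t _; simp
  | succ n ih =>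
    intro t ht
    rw [← Equiv.sum_comp Equiv.Perm.decomposeFin.symm, Fintype.sum_prod_type]
    have hS : 0 < ∑ i, t i := Finset.sum_pos (fun i _ => ht i) Finset.univ_nonempty
    have key : ∀ p : Fin (n + 1), ∑ e : Equiv.Perm (Fin n),
        ∏ i, (∑ j ∈ Finset.Ici i, t (Equiv.Perm.decomposeFin.symm (p, e) j))⁻¹
        = (∑ i, t i)⁻¹ * (t p * (∏ i, t i)⁻¹) := by
      intro p
      have h1 : ∏ i, t i = t p * ∏ x : Fin n, t (Equiv.swap 0 p x.succ) := by
        rw [← Equiv.prod_comp (Equiv.swap 0 p), Fin.prod_univ_succ, Equiv.swap_apply_left]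
      have hp := (ht p).ne'
      rw [h1, mul_inv, mul_inv_cancel_left₀ hp,
        ih (fun x => t (Equiv.swap 0 p x.succ)) (fun _ => ht _), Finset.mul_sum]
      refine Finset.sum_congr rfl fun e _ => ?_
      rw [Fin.prod_univ_succ]
      congr 1
      · have h0 : (Finset.Ici (0 : Fin (n + 1))) = Finset.univ := by ext; simp
        rw [h0, Equiv.sum_comp (Equiv.Perm.decomposeFin.symm (p, e)) t]
      · refine Finset.prod_congr rfl fun i _ => ?_
        rw [← Fin.map_succEmb_Ici, Finset.sum_map]
        simp only [Fin.coe_succEmb, Equiv.Perm.decomposeFin_symm_apply_succ]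
    simp_rw [key]
    rw [← Finset.mul_sum, ← Finset.sum_mul, inv_mul_cancel_left₀ hS.ne']


/-- **Polymath8b, Lemma 4.5**: for positive reals `t₁, …, t_r`,
`1/(t₁ ⋯ t_r) = ∑_{σ ∈ S_r} ∏_{i=1}^r (∑_{j=i}^r t_{σ(j)})⁻¹`. -/
theorem inv_prod_eq_sum_perm (r : ℕ) (hr : 1 ≤ r) (t : Fin r → ℝ) (ht : ∀ i, 0 < t i) :
    (∏ i, t i)⁻¹ = ∑ σ : Equiv.Perm (Fin r), ∏ i, (∑ j ∈ Finset.Ici i, t (σ j))⁻¹ := by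
  exact inv_prod_eq_sum_perm_aux r t ht
end
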